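/- Let ρ and σ be density operators on a finite-dimensional complex Hilbert space with supp(ρ) ⊆ supp(σ). Then for every α ∈ [1/2, 1) ∪ (1, ∞), the measured Rényi divergence is dominated by the sandwiched Rényi divergence: D_α^𝕄(ρ‖σ) ≤ D_α^*(ρ‖σ). -/

import Mathlib

open Matrix
open scoped ComplexOrder Kronecker

noncomputable section

/-- Real power of a Hermitian matrix via functional calculus on its support
(Moore–Penrose convention); junk value `0` for non-Hermitian input. -/
def Matrix.rpowH {ι : Type*} [Fintype ι] [DecidableEq ι] (A : Matrix ι ι ℂ) (p : ℝ) :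
    Matrix ι ι ℂ :=
  if hA : A.IsHermitian then
    (hA.eigenvectorUnitary : Matrix ι ι ℂ) *
      Matrix.diagonal (fun i => ((hA.eigenvalues i ^ p : ℝ) : ℂ)) *
      star (hA.eigenvectorUnitary : Matrix ι ι ℂ)
  else 0

/-- Real part of the trace. -/
def retr {ι : Type*} [Fintype ι] (A : Matrix ι ι ℂ) : ℝ :=
  (Matrix.trace A).re

open scoped Classical in
/-- Classical Rényi divergence of order `α` of two (finitely supported) probability
mass functions, with value `+∞` when `α > 1` and absolute continuity fails. -/
def renyiDivE (α : ℝ) {k : ℕ} (p q : Fin k → ℝ) : EReal :=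
  if α < 1 ∨ ∀ i, q i = 0 → p i = 0 then
    (((α - 1)⁻¹ * Real.log (∑ i, p i ^ α * q i ^ (1 - α)) : ℝ) : EReal)
  else (⊤ : EReal)

/-- Measured Rényi divergence: supremum of classical Rényi divergences of the outcome
distributions over all finite POVMs. -/
def measuredRenyiDiv {ι : Type*} [Fintype ι] [DecidableEq ι]
    (α : ℝ) (ρ σ : Matrix ι ι ℂ) : EReal :=
  ⨆ (k : ℕ) (P : Fin k → Matrix ι ι ℂ) (_ : ∀ i, (P i).PosSemidef) (_ : ∑ i, P i = 1),
    renyiDivE α (fun i => retr (ρ * P i)) (fun i => retr (σ * P i))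


/-- Sandwiched Rényi divergence
`D_α^*(ρ‖σ) = (α-1)⁻¹ log Tr[(σ^{(1-α)/(2α)} ρ σ^{(1-α)/(2α)})^α]`. -/
def sandwichedRenyiDiv {ι : Type*} [Fintype ι] [DecidableEq ι]
    (α : ℝ) (ρ σ : Matrix ι ι ℂ) : ℝ :=
  (α - 1)⁻¹ * Real.log (retr (Matrix.rpowH
    (Matrix.rpowH σ ((1 - α) / (2 * α)) * ρ * Matrix.rpowH σ ((1 - α) / (2 * α))) α))

/-!
Write `p`, `q` for the outcome distributions of a POVM `P` on `ρ`, `σ`, put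
`Q = ∑ i, p i ^ α * q i ^ (1 - α)` and `T = Tr X ^ α`, where `X = σ^γ ρ σ^γ` with
`γ = (1 - α) / (2α)`. The claim is `Q ≤ T` for `α > 1` and `T ≤ Q` for `1/2 ≤ α < 1`. Both follow
from the three lines theorem. The complex likelihood operators `W(z) = ∑ i, (p i / q i)^z P i` are
contractions for `Re z = 0`, satisfy Kadison's inequality, and turn trace estimates
`|Tr M P i| ≤ p i ^ a * q i ^ (1 - a)` into `|Tr M W(z)| ≤ Q` for `Re z = α - a`.

* For `α > 1` the function `Tr[σ^{z/2} X^{α(1-z)} σ^{z/2} W(αz)]` is bounded by `T` on `Re z = 0`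
  and by `Q` on `Re z = 1`. At `z = t = (α - 1) / α` it equals `Tr[ρ W(α - 1)] = Q`, so
  `Q ≤ T^{1-t} Q^t`.
* For `1/2 ≤ α < 1` put `B(z) = X^{(α(1-z)-1)/2} σ^γ ρ^{1/2}`, so that `B(z) B(z)ᴴ = X^{α(1-Re z)}`.
  The function `Tr[σ^{z/2} B(z) ρ^{1/2} W((α(1+z)-1)/2)]` is bounded by `√Q √T` on `Re z = 0` and by
  `Q` on `Re z = 1`, because `B` is then a contraction. At `z = t = (1 - α) / α` it equals
  `Tr[X^{α-1} σ^γ ρ σ^γ] = T`, so `T ≤ (√Q √T)^{1-t} Q^t`.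
-/

open scoped MatrixOrder Matrix.Norms.L2Operator

lemma le_of_le_rpow_mul_rpow {a b t : ℝ} (ha : 0 ≤ a) (hb : 0 ≤ b) (ht : t < 1)
    (h : a ≤ b ^ (1 - t) * a ^ t) : a ≤ b := by
  rcases ha.eq_or_lt with rfl | ha
  · exact hb
  refine (Real.rpow_le_rpow_iff ha.le hb (sub_pos.2 ht)).1 ?_
  rwa [Real.rpow_sub ha, Real.rpow_one, div_le_iff₀ (Real.rpow_pos_of_pos ha t)]

lemma le_of_le_sqrt_mul_sqrt_rpow_mul_rpow {a b t : ℝ} (ha : 0 ≤ a) (hb : 0 ≤ b) (ht₀ : 0 ≤ t)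
    (ht₁ : t ≤ 1) (h : a ≤ (√b * √a) ^ (1 - t) * b ^ t) : a ≤ b := by
  refine le_of_le_rpow_mul_rpow (t := (1 - t) / 2) ha hb (by linarith) (h.trans_eq ?_)
  have hsqrt {x : ℝ} (hx : 0 ≤ x) : √x ^ (1 - t) = x ^ ((1 - t) / 2) := by
    rw [Real.sqrt_eq_rpow, ← Real.rpow_mul hx, one_div_mul_eq_div]
  have hexp : 1 - (1 - t) / 2 = (1 - t) / 2 + t := by ring
  rw [Real.mul_rpow (Real.sqrt_nonneg b) (Real.sqrt_nonneg a), hsqrt ha, hsqrt hb, mul_right_comm,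
    hexp, Real.rpow_add_of_nonneg hb (by linarith) ht₀]

section SupportCpow

/-- The complex power of a nonnegative real with the convention `0 ^ z = 0` for all `z`, including
`z = 0`; unlike `(x : ℂ) ^ z` it is then an entire function of `z` also for `x = 0`. -/
def supportCpow (x : ℝ) (z : ℂ) : ℂ := if 0 < x then (x : ℂ) ^ z else 0

lemma supportCpow_of_pos {x : ℝ} (hx : 0 < x) (z : ℂ) : supportCpow x z = (x : ℂ) ^ z :=
  if_pos hx

lemma supportCpow_of_nonpos {x : ℝ} (hx : x ≤ 0) (z : ℂ) : supportCpow x z = 0 :=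
  if_neg hx.not_gt

lemma supportCpow_add (x : ℝ) (z w : ℂ) :
    supportCpow x (z + w) = supportCpow x z * supportCpow x w := by
  rcases lt_or_ge 0 x with hx | hx
  · simp only [supportCpow_of_pos hx, Complex.cpow_add _ _ (Complex.ofReal_ne_zero.2 hx.ne')]
  · simp only [supportCpow_of_nonpos hx, mul_zero]

lemma star_supportCpow (x : ℝ) (z : ℂ) : star (supportCpow x z) = supportCpow x (star z) := by
  rcases lt_or_ge 0 x with hx | hx
  · have harg : (x : ℂ).arg ≠ Real.pi := by
      rw [Complex.arg_ofReal_of_nonneg hx.le]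
      exact Real.pi_ne_zero.symm
    simp only [supportCpow_of_pos hx, Complex.star_def]
    rw [Complex.cpow_conj _ _ harg, Complex.conj_ofReal]
  · simp only [supportCpow_of_nonpos hx, star_zero]

lemma norm_supportCpow_of_pos {x : ℝ} (hx : 0 < x) (z : ℂ) : ‖supportCpow x z‖ = x ^ z.re := by
  rw [supportCpow_of_pos hx, Complex.norm_cpow_eq_rpow_re_of_pos hx]

lemma norm_supportCpow_le_one (x : ℝ) {z : ℂ} (hz : z.re = 0) : ‖supportCpow x z‖ ≤ 1 := by
  rcases lt_or_ge 0 x with hx | hx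
  · rw [norm_supportCpow_of_pos hx, hz, Real.rpow_zero]
  · simp [supportCpow_of_nonpos hx]

lemma norm_supportCpow_sq (x : ℝ) (z : ℂ) : ‖supportCpow x z‖ ^ 2 = ‖supportCpow x (2 * z)‖ := by
  rw [two_mul, supportCpow_add, norm_mul, sq]

lemma supportCpow_ofReal {x p : ℝ} (hx : 0 ≤ x) (hp : p ≠ 0) :
    supportCpow x p = ((x ^ p : ℝ) : ℂ) := by
  rcases hx.eq_or_lt with rfl | hx
  · simp [supportCpow_of_nonpos le_rfl, Real.zero_rpow hp]
  · rw [supportCpow_of_pos hx, Complex.ofReal_cpow hx.le]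

lemma supportCpow_ofReal_eq_norm (x p : ℝ) : supportCpow x p = (‖supportCpow x p‖ : ℂ) := by
  rcases lt_or_ge 0 x with hx | hx
  · rw [norm_supportCpow_of_pos hx, supportCpow_of_pos hx, Complex.ofReal_re,
      Complex.ofReal_cpow hx.le]
  · simp [supportCpow_of_nonpos hx]

lemma norm_supportCpow_div_mul {p q α a : ℝ} (hp : 0 ≤ p) (hq : 0 ≤ q) (hα₀ : α ≠ 0) (hα₁ : α ≠ 1)
    {z : ℂ} (hz : z.re = α - a) :
    ‖supportCpow (p / q) z‖ * (p ^ a * q ^ (1 - a)) = p ^ α * q ^ (1 - α) := by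
  rcases hp.eq_or_lt with rfl | hp
  · simp [supportCpow_of_nonpos, Real.zero_rpow hα₀]
  rcases hq.eq_or_lt with rfl | hq
  · simp [supportCpow_of_nonpos, Real.zero_rpow (sub_ne_zero.2 hα₁.symm)]
  have hp_pow : p ^ α = p ^ (α - a) * p ^ a := by rw [← Real.rpow_add hp, sub_add_cancel]
  have hq_pow : q ^ (1 - α) = q ^ (1 - a) / q ^ (α - a) := by
    rw [← Real.rpow_sub hq, sub_sub_sub_cancel_right]
  rw [norm_supportCpow_of_pos (div_pos hp hq), hz, Real.div_rpow hp.le hq.le, hp_pow, hq_pow]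
  ring

end SupportCpow

section Strip

open Complex.HadamardThreeLines

variable {E F : Type*} [NormedAddCommGroup E] [NormedSpace ℂ E] [NormedAddCommGroup F]
  [NormedSpace ℂ F]

/-- Entire functions that are bounded on the strip `0 ≤ Re z ≤ 1`: a class that is stable under
products and to which the three lines theorem applies. -/
structure IsStripBounded (f : ℂ → E) : Prop where
  differentiable : Differentiable ℂ f
  exists_bound : ∃ C, ∀ z ∈ verticalClosedStrip 0 1, ‖f z‖ ≤ C

lemma isStripBounded_const (c : E) : IsStripBounded fun _ => c :=
  ⟨differentiable_const c, ‖c‖, fun _ _ => le_rfl⟩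

lemma isStripBounded_supportCpow (x : ℝ) {g : ℂ → ℂ} {a : ℂ} {b : ℝ} (hg : ∀ z, g z = a + b * z) :
    IsStripBounded fun z => supportCpow x (g z) := by
  rcases lt_or_ge 0 x with hx | hx
  · have hx' : (x : ℂ) ≠ 0 := Complex.ofReal_ne_zero.2 hx.ne'
    have hcont : Continuous fun s : ℝ => x ^ (a.re + b * s) :=
      continuous_const.rpow (by fun_prop) fun _ => .inl hx.ne'
    obtain ⟨C, hC⟩ := isCompact_Icc.exists_bound_of_continuousOn hcont.continuousOn
    refine ⟨?_, C, fun z hz => ?_⟩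
    · simp only [supportCpow_of_pos hx, hg]
      exact (by fun_prop : Differentiable ℂ fun z : ℂ => a + b * z).const_cpow (.inl hx')
    · have hbound := (le_abs_self _).trans (hC z.re hz)
      simpa [norm_supportCpow_of_pos hx, hg] using hbound
  · simpa only [supportCpow_of_nonpos hx] using isStripBounded_const (0 : ℂ)

namespace IsStripBounded

lemma mul {R : Type*} [NormedRing R] [NormedAlgebra ℂ R] {f g : ℂ → R} (hf : IsStripBounded f)
    (hg : IsStripBounded g) : IsStripBounded fun z => f z * g z := by
  obtain ⟨hf, C, hC⟩ := hf
  obtain ⟨hg, D, hD⟩ := hg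
  refine ⟨hf.mul hg, C * D, fun z hz => (norm_mul_le _ _).trans ?_⟩
  exact mul_le_mul (hC z hz) (hD z hz) (norm_nonneg _) ((norm_nonneg _).trans (hC z hz))

lemma pi {κ : Type*} [Fintype κ] {f : ℂ → κ → E} (hf : ∀ i, IsStripBounded fun z => f z i) :
    IsStripBounded f := by
  choose C hC using fun i => (hf i).exists_bound
  refine ⟨differentiable_pi.2 fun i => (hf i).differentiable, ∑ i, |C i|, fun z hz => ?_⟩
  refine (pi_norm_le_iff_of_nonneg (Finset.sum_nonneg fun i _ => abs_nonneg _)).2 fun i => ?_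
  calc ‖f z i‖ ≤ |C i| := (hC i z hz).trans (le_abs_self _)
    _ ≤ ∑ i, |C i| := Finset.single_le_sum (fun j _ => abs_nonneg (C j)) (Finset.mem_univ i)

lemma linearMap_comp [FiniteDimensional ℂ E] (L : E →ₗ[ℂ] F) {f : ℂ → E}
    (hf : IsStripBounded f) : IsStripBounded fun z => L (f z) := by
  obtain ⟨hf, C, hC⟩ := hf
  let L' : E →L[ℂ] F := L.toContinuousLinearMap
  refine ⟨L'.differentiable.comp hf, ‖L'‖ * C, fun z hz => (L'.le_opNorm _).trans ?_⟩
  exact mul_le_mul_of_nonneg_left (hC z hz) (norm_nonneg _)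

lemma norm_apply_ofReal_le {f : ℂ → E} (hf : IsStripBounded f) {a b t : ℝ} (ht : t ∈ Set.Icc 0 1)
    (ha : ∀ z : ℂ, z.re = 0 → ‖f z‖ ≤ a) (hb : ∀ z : ℂ, z.re = 1 → ‖f z‖ ≤ b) :
    ‖f t‖ ≤ a ^ (1 - t) * b ^ t := by
  obtain ⟨hdiff, C, hC⟩ := hf
  have hbdd : BddAbove ((norm ∘ f) '' verticalClosedStrip 0 1) := ⟨C, Set.forall_mem_image.2 hC⟩
  exact norm_le_interp_of_mem_verticalClosedStrip₀₁' f (z := t) ht hdiff.diffContOnCl hbdd ha hb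

end IsStripBounded

end Strip

section Trace

variable {ι : Type*} [Fintype ι] {A B P : Matrix ι ι ℂ}

lemma retr_mul_comm (A B : Matrix ι ι ℂ) : retr (A * B) = retr (B * A) :=
  congrArg Complex.re (trace_mul_comm A B)

lemma exists_eq_conjTranspose_mul_self (hA : A.PosSemidef) : ∃ R : Matrix ι ι ℂ, A = Rᴴ * R := by
  classical
  exact CStarAlgebra.nonneg_iff_eq_star_mul_self.1 hA.nonneg

lemma retr_nonneg (hA : A.PosSemidef) : 0 ≤ retr A :=
  (Complex.le_def.1 hA.trace_nonneg).1

lemma retr_eq_zero_iff (hA : A.PosSemidef) : retr A = 0 ↔ A = 0 := by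
  have him : A.trace.im = 0 := (Complex.le_def.1 hA.trace_nonneg).2.symm
  rw [← hA.trace_eq_zero_iff, Complex.ext_iff]
  simp [him, retr]

lemma retr_mul_nonneg (hA : A.PosSemidef) (hB : B.PosSemidef) : 0 ≤ retr (A * B) := by
  obtain ⟨R, rfl⟩ := exists_eq_conjTranspose_mul_self hB
  rw [← Matrix.mul_assoc, retr_mul_comm, ← Matrix.mul_assoc]
  exact retr_nonneg (hA.mul_mul_conjTranspose_same R)

lemma retr_mul_le_retr_mul (hAB : A ≤ B) (hP : P.PosSemidef) : retr (A * P) ≤ retr (B * P) := by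
  have hdiff : 0 ≤ retr ((B - A) * P) := retr_mul_nonneg (Matrix.le_iff.1 hAB) hP
  rwa [Matrix.sub_mul, retr, trace_sub, Complex.sub_re, sub_nonneg] at hdiff

lemma mul_eq_zero_of_retr_mul_eq_zero (hA : A.PosSemidef) (hB : B.PosSemidef)
    (h : retr (A * B) = 0) : A * B = 0 := by
  obtain ⟨S, rfl⟩ := exists_eq_conjTranspose_mul_self hA
  obtain ⟨R, rfl⟩ := exists_eq_conjTranspose_mul_self hB
  have hgram : retr ((S * Rᴴ)ᴴ * (S * Rᴴ)) = 0 := by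
    rw [← h, conjTranspose_mul, conjTranspose_conjTranspose, Matrix.mul_assoc, retr_mul_comm]
    simp only [Matrix.mul_assoc]
  have hzero : S * Rᴴ = 0 := conjTranspose_mul_self_eq_zero.1
    ((retr_eq_zero_iff (posSemidef_conjTranspose_mul_self _)).1 hgram)
  calc Sᴴ * S * (Rᴴ * R) = Sᴴ * (S * Rᴴ) * R := by simp only [Matrix.mul_assoc]
    _ = 0 := by rw [hzero, Matrix.mul_zero, Matrix.zero_mul]

lemma norm_trace_mul_mul_le (hP : P.PosSemidef) (A B : Matrix ι ι ℂ) :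
    ‖(A * B * P).trace‖ ≤ √(retr (A * Aᴴ * P)) * √(retr (Bᴴ * B * P)) := by
  let := P.toMatrixSeminormedAddCommGroup hP
  let := P.toMatrixInnerProductSpace hP
  have hinner : (A * B * P).trace = inner ℂ Aᴴ B := by
    change _ = (B * P * Aᴴᴴ).trace
    rw [conjTranspose_conjTranspose, Matrix.mul_assoc, trace_mul_comm]
  have hA : √(retr (A * Aᴴ * P)) = ‖Aᴴ‖ := by
    rw [norm_eq_sqrt_re_inner (𝕜 := ℂ)]
    change _ = √(retr (Aᴴ * P * Aᴴᴴ))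
    rw [conjTranspose_conjTranspose, Matrix.mul_assoc, retr_mul_comm]
  have hB : √(retr (Bᴴ * B * P)) = ‖B‖ := by
    rw [norm_eq_sqrt_re_inner (𝕜 := ℂ)]
    change _ = √(retr (B * P * Bᴴ))
    rw [Matrix.mul_assoc, retr_mul_comm]
  rw [hinner, hA, hB]
  exact norm_inner_le_norm _ _

variable [DecidableEq ι]

lemma norm_le_one_of_norm_mul_conjTranspose_le_one (h : ‖A * Aᴴ‖ ≤ 1) : ‖A‖ ≤ 1 := by
  rwa [← star_eq_conjTranspose, CStarRing.norm_self_mul_star, ← sq,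
    sq_le_one_iff₀ (norm_nonneg _)] at h

lemma norm_trace_mul_mul_mul_le (hP : P.PosSemidef) {C : Matrix ι ι ℂ} (hC : ‖C‖ ≤ 1)
    (A B : Matrix ι ι ℂ) :
    ‖(A * C * B * P).trace‖ ≤ √(retr (A * Aᴴ * P)) * √(retr (Bᴴ * B * P)) := by
  have hCC : Cᴴ * C ≤ 1 := by
    rw [← CStarAlgebra.norm_le_one_iff_of_nonneg _ (posSemidef_conjTranspose_mul_self C).nonneg,
      l2_opNorm_conjTranspose_mul_self]
    exact mul_le_one₀ hC (norm_nonneg _) hC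
  have hCB : (C * B)ᴴ * (C * B) ≤ Bᴴ * B := by
    simpa [Matrix.mul_assoc, star_eq_conjTranspose] using star_left_conjugate_le_conjugate hCC B
  rw [Matrix.mul_assoc A]
  refine (norm_trace_mul_mul_le hP A (C * B)).trans ?_
  gcongr
  exact retr_mul_le_retr_mul hCB hP

end Trace

section CpowH

variable {ι : Type*} [Fintype ι] [DecidableEq ι]

/-- The complex power of a positive semidefinite matrix on its support, extending `Matrix.rpowH`
from real to complex exponents; junk value `0` for non-Hermitian input. In contrast to
`Matrix.rpowH`, the exponent `0` gives the support projection. -/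
def cpowH (A : Matrix ι ι ℂ) (z : ℂ) : Matrix ι ι ℂ :=
  if hA : A.IsHermitian then
    Unitary.conjStarAlgAut ℂ (Matrix ι ι ℂ) hA.eigenvectorUnitary
      (diagonal fun i => supportCpow (hA.eigenvalues i) z)
  else 0

lemma rpowH_eq_cpowH {A : Matrix ι ι ℂ} (hA : A.PosSemidef) {p : ℝ} (hp : p ≠ 0) :
    A.rpowH p = cpowH A p := by
  simp only [rpowH, cpowH, dif_pos hA.1, Unitary.conjStarAlgAut_apply,
    supportCpow_ofReal (hA.eigenvalues_nonneg _) hp]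

lemma cpowH_one {A : Matrix ι ι ℂ} (hA : A.PosSemidef) : cpowH A 1 = A := by
  have hpow (i : ι) : supportCpow (hA.1.eigenvalues i) 1 = hA.1.eigenvalues i := by
    simpa using supportCpow_ofReal (hA.eigenvalues_nonneg i) one_ne_zero
  simp only [cpowH, dif_pos hA.1, hpow]
  exact hA.1.spectral_theorem.symm

lemma cpowH_add (A : Matrix ι ι ℂ) (z w : ℂ) : cpowH A (z + w) = cpowH A z * cpowH A w := by
  by_cases hA : A.IsHermitian
  · simp only [cpowH, dif_pos hA, supportCpow_add, ← map_mul, diagonal_mul_diagonal]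
  · simp only [cpowH, dif_neg hA, Matrix.mul_zero]

lemma conjTranspose_cpowH (A : Matrix ι ι ℂ) (z : ℂ) : (cpowH A z)ᴴ = cpowH A (star z) := by
  by_cases hA : A.IsHermitian
  · simp only [cpowH, dif_pos hA, ← star_eq_conjTranspose, ← map_star]
    simp only [star_eq_conjTranspose, diagonal_conjTranspose, Pi.star_def, star_supportCpow]
  · simp only [cpowH, dif_neg hA, conjTranspose_zero]

lemma conjTranspose_cpowH_ofReal (A : Matrix ι ι ℂ) (p : ℝ) : (cpowH A p)ᴴ = cpowH A p := by
  rw [conjTranspose_cpowH, Complex.star_def, Complex.conj_ofReal]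

lemma cpowH_mul_conjTranspose_cpowH (A : Matrix ι ι ℂ) (z : ℂ) :
    cpowH A z * (cpowH A z)ᴴ = cpowH A (2 * z.re : ℝ) := by
  rw [conjTranspose_cpowH, ← cpowH_add, Complex.star_def, Complex.add_conj]

lemma conjTranspose_cpowH_mul_cpowH (A : Matrix ι ι ℂ) (z : ℂ) :
    (cpowH A z)ᴴ * cpowH A z = cpowH A (2 * z.re : ℝ) := by
  rw [conjTranspose_cpowH, ← cpowH_add, Complex.star_def, add_comm, Complex.add_conj]

lemma norm_cpowH_le_one (A : Matrix ι ι ℂ) {z : ℂ} (hz : z.re = 0) : ‖cpowH A z‖ ≤ 1 := by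
  by_cases hA : A.IsHermitian
  · simp only [cpowH, dif_pos hA, Unitary.conjStarAlgAut_apply]
    rw [← Unitary.coe_star, CStarRing.norm_mul_coe_unitary, CStarRing.norm_coe_unitary_mul,
      l2_opNorm_diagonal]
    exact (pi_norm_le_iff_of_nonneg zero_le_one).2 fun i => norm_supportCpow_le_one _ hz
  · simp only [cpowH, dif_neg hA, norm_zero, zero_le_one]

lemma posSemidef_cpowH_ofReal (A : Matrix ι ι ℂ) (p : ℝ) : (cpowH A p).PosSemidef := by
  have hsq := cpowH_mul_conjTranspose_cpowH A (p / 2 : ℝ)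
  rw [Complex.ofReal_re, mul_div_cancel₀ p two_ne_zero] at hsq
  exact hsq ▸ posSemidef_self_mul_conjTranspose _

lemma retr_cpowH_ofReal_pos {A : Matrix ι ι ℂ} (hA : A.PosSemidef) (hA₀ : A ≠ 0) (p : ℝ) :
    0 < retr (cpowH A p) := by
  refine (retr_nonneg (posSemidef_cpowH_ofReal A p)).lt_of_ne' fun h => hA₀ ?_
  have hzero : cpowH A p = 0 := (retr_eq_zero_iff (posSemidef_cpowH_ofReal A p)).1 h
  rw [← cpowH_one hA, ← add_sub_cancel (p : ℂ) 1, cpowH_add, hzero, Matrix.zero_mul]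

lemma isStripBounded_cpowH (A : Matrix ι ι ℂ) {g : ℂ → ℂ} {a : ℂ} {b : ℝ}
    (hg : ∀ z, g z = a + b * z) : IsStripBounded fun z => cpowH A (g z) := by
  by_cases hA : A.IsHermitian
  · simp only [cpowH, dif_pos hA]
    have hdiag : IsStripBounded fun z =>
        (diagonal fun i => supportCpow (hA.eigenvalues i) (g z) : Matrix ι ι ℂ) :=
      (IsStripBounded.pi fun i => isStripBounded_supportCpow _ hg).linearMap_comp
        (diagonalLinearMap ι ℂ ℂ)
    exact ((isStripBounded_const _).mul hdiag).mul (isStripBounded_const _)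
  · simpa only [cpowH, dif_neg hA] using isStripBounded_const (0 : Matrix ι ι ℂ)

lemma cpowH_mul_eq_zero {A B : Matrix ι ι ℂ} (hA : A.PosSemidef) (hAB : A * B = 0) (z : ℂ) :
    cpowH A z * B = 0 := by
  rw [← sub_add_cancel z 1, cpowH_add, cpowH_one hA, Matrix.mul_assoc, hAB, Matrix.mul_zero]

lemma mul_cpowH_eq_zero {A B : Matrix ι ι ℂ} (hA : A.PosSemidef) (hBA : B * A = 0) (z : ℂ) :
    B * cpowH A z = 0 := by
  rw [← add_sub_cancel 1 z, cpowH_add, cpowH_one hA, ← Matrix.mul_assoc, hBA, Matrix.zero_mul]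

end CpowH

section POVM

variable {ι κ : Type*} [Fintype ι] [DecidableEq ι] [Fintype κ]

/-- A finite positive operator-valued measure: positive semidefinite matrices summing to `1`. -/
structure IsPOVM (P : κ → Matrix ι ι ℂ) : Prop where
  posSemidef : ∀ i, (P i).PosSemidef
  sum_eq_one : ∑ i, P i = 1

variable {P : κ → Matrix ι ι ℂ}

lemma IsPOVM.sum_sub_mul_mul_conjTranspose_sub (hP : IsPOVM P) (u : κ → ℂ) {W : Matrix ι ι ℂ}
    (hW : W = ∑ i, u i • P i) :
    ∑ i, (W - u i • 1) * P i * (W - u i • 1)ᴴ = ∑ i, ‖u i‖ ^ 2 • P i - W * Wᴴ := by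
  have hW' : Wᴴ = ∑ i, star (u i) • P i := by
    simp only [hW, conjTranspose_sum, conjTranspose_smul, (hP.posSemidef _).1.eq]
  have hterm (i : κ) : (W - u i • 1) * P i * (W - u i • 1)ᴴ =
      W * P i * Wᴴ - W * (star (u i) • P i) - u i • P i * Wᴴ + ‖u i‖ ^ 2 • P i := by
    have hnorm : (‖u i‖ ^ 2 : ℝ) • P i = u i • star (u i) • P i := by
      rw [smul_smul, Complex.star_def, Complex.mul_conj', ← Complex.ofReal_pow, Complex.coe_smul]
    simp only [hnorm, conjTranspose_sub, conjTranspose_smul, conjTranspose_one, Matrix.sub_mul,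
      Matrix.mul_sub, smul_mul_assoc, mul_smul_comm, Matrix.one_mul, Matrix.mul_one, smul_sub,
      smul_comm (star (u i)) (u i)]
    abel
  simp only [hterm, Finset.sum_add_distrib, Finset.sum_sub_distrib, ← Finset.sum_mul,
    ← Finset.mul_sum, hP.sum_eq_one, ← hW, ← hW', Matrix.mul_one]
  abel

-- Kadison's inequality for the unital completely positive map `u ↦ ∑ i, u i • P i`.
lemma IsPOVM.sum_smul_mul_conjTranspose_le (hP : IsPOVM P) (u : κ → ℂ) :
    (∑ i, u i • P i) * (∑ i, u i • P i)ᴴ ≤ ∑ i, ‖u i‖ ^ 2 • P i := by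
  rw [Matrix.le_iff, ← hP.sum_sub_mul_mul_conjTranspose_sub u rfl]
  exact posSemidef_sum _ fun i _ => (hP.posSemidef i).mul_mul_conjTranspose_same _

lemma IsPOVM.norm_sum_smul_le_one (hP : IsPOVM P) {u : κ → ℂ} (hu : ∀ i, ‖u i‖ ≤ 1) :
    ‖∑ i, u i • P i‖ ≤ 1 := by
  have hweights : ∑ i, ‖u i‖ ^ 2 • P i ≤ 1 := by
    rw [← hP.sum_eq_one]
    refine Finset.sum_le_sum fun i _ => ?_
    exact smul_le_of_le_one_left (hP.posSemidef i).nonneg (pow_le_one₀ (norm_nonneg _) (hu i))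
  refine norm_le_one_of_norm_mul_conjTranspose_le_one ?_
  exact (CStarAlgebra.norm_le_one_iff_of_nonneg _ (mul_star_self_nonneg _)).2
    ((hP.sum_smul_mul_conjTranspose_le u).trans hweights)

end POVM

section Likelihood

variable {ι κ : Type*} [Fintype ι] [Fintype κ]

/-- The sum `∑ i, p i ^ α * q i ^ (1 - α)` defining the classical Rényi divergence of the outcome
distributions `p` and `q` of the measurement `P` on the states `ρ` and `σ`. -/
def measuredSum (α : ℝ) (ρ σ : Matrix ι ι ℂ) (P : κ → Matrix ι ι ℂ) : ℝ :=
  ∑ i, retr (ρ * P i) ^ α * retr (σ * P i) ^ (1 - α)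

/-- The operator `∑ i, (p i / q i) ^ z • P i` quantising the complex power of the likelihood ratio
of the outcome distributions `p` and `q` of the measurement `P` on the states `ρ` and `σ`. Outcomes
with `p i = 0` or `q i = 0` are left out, for every `z`. -/
def likelihoodOp (ρ σ : Matrix ι ι ℂ) (P : κ → Matrix ι ι ℂ) (z : ℂ) : Matrix ι ι ℂ :=
  ∑ i, supportCpow (retr (ρ * P i) / retr (σ * P i)) z • P i

variable {ρ σ : Matrix ι ι ℂ} {P : κ → Matrix ι ι ℂ} {α a : ℝ} {z : ℂ}

lemma measuredSum_nonneg (hρ : ρ.PosSemidef) (hσ : σ.PosSemidef) (hP : ∀ i, (P i).PosSemidef) :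
    0 ≤ measuredSum α ρ σ P :=
  Finset.sum_nonneg fun i _ => mul_nonneg (Real.rpow_nonneg (retr_mul_nonneg hρ (hP i)) _)
    (Real.rpow_nonneg (retr_mul_nonneg hσ (hP i)) _)

lemma trace_mul_likelihoodOp (M : Matrix ι ι ℂ) :
    (M * likelihoodOp ρ σ P z).trace =
      ∑ i, supportCpow (retr (ρ * P i) / retr (σ * P i)) z * (M * P i).trace := by
  simp only [likelihoodOp, Finset.mul_sum, trace_sum, mul_smul_comm, trace_smul, smul_eq_mul]

lemma sum_norm_supportCpow_mul_eq_measuredSum (hρ : ρ.PosSemidef) (hσ : σ.PosSemidef)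
    (hP : ∀ i, (P i).PosSemidef) (hα₀ : α ≠ 0) (hα₁ : α ≠ 1) (hz : z.re = α - a) :
    ∑ i, ‖supportCpow (retr (ρ * P i) / retr (σ * P i)) z‖ *
      (retr (ρ * P i) ^ a * retr (σ * P i) ^ (1 - a)) = measuredSum α ρ σ P :=
  Finset.sum_congr rfl fun i _ => norm_supportCpow_div_mul (retr_mul_nonneg hρ (hP i))
    (retr_mul_nonneg hσ (hP i)) hα₀ hα₁ hz

lemma norm_trace_mul_likelihoodOp_le (hρ : ρ.PosSemidef) (hσ : σ.PosSemidef)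
    (hP : ∀ i, (P i).PosSemidef) (hα₀ : α ≠ 0) (hα₁ : α ≠ 1) (hz : z.re = α - a)
    {M : Matrix ι ι ℂ}
    (hM : ∀ i, ‖(M * P i).trace‖ ≤ retr (ρ * P i) ^ a * retr (σ * P i) ^ (1 - a)) :
    ‖(M * likelihoodOp ρ σ P z).trace‖ ≤ measuredSum α ρ σ P := by
  rw [trace_mul_likelihoodOp, ← sum_norm_supportCpow_mul_eq_measuredSum hρ hσ hP hα₀ hα₁ hz]
  refine (norm_sum_le _ _).trans (Finset.sum_le_sum fun i _ => ?_)
  rw [norm_mul]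
  exact mul_le_mul_of_nonneg_left (hM i) (norm_nonneg _)

lemma retr_mul_likelihoodOp (hρ : ρ.PosSemidef) (hσ : σ.PosSemidef)
    (hP : ∀ i, (P i).PosSemidef) (hα₀ : α ≠ 0) (hα₁ : α ≠ 1) :
    retr (ρ * likelihoodOp ρ σ P (α - 1 : ℝ)) = measuredSum α ρ σ P := by
  rw [retr, trace_mul_likelihoodOp, Complex.re_sum,
    ← sum_norm_supportCpow_mul_eq_measuredSum hρ hσ hP hα₀ hα₁ (Complex.ofReal_re (α - 1))]
  refine Finset.sum_congr rfl fun i _ => ?_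
  rw [supportCpow_ofReal_eq_norm, Complex.re_ofReal_mul, Complex.norm_real, norm_norm, sub_self,
    Real.rpow_one, Real.rpow_zero, mul_one, retr]

variable [DecidableEq ι]

lemma mul_likelihoodOp_zero_mul (hP : IsPOVM P) (hρ : ρ.PosSemidef) (hσ : σ.PosSemidef)
    {A B : Matrix ι ι ℂ} (hA : ∀ i, retr (ρ * P i) = 0 → A * P i = 0)
    (hB : ∀ i, retr (σ * P i) = 0 → P i * B = 0) : A * likelihoodOp ρ σ P 0 * B = A * B := by
  have hterm (i : κ) : A * (supportCpow (retr (ρ * P i) / retr (σ * P i)) 0 • P i) * B =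
      A * P i * B := by
    rcases (retr_mul_nonneg hρ (hP.posSemidef i)).eq_or_lt with hp | hp
    · rw [mul_smul_comm, smul_mul_assoc, hA i hp.symm, Matrix.zero_mul, smul_zero]
    rcases (retr_mul_nonneg hσ (hP.posSemidef i)).eq_or_lt with hq | hq
    · rw [mul_smul_comm, smul_mul_assoc, Matrix.mul_assoc, hB i hq.symm, Matrix.mul_zero, smul_zero]
    · rw [supportCpow_of_pos (div_pos hp hq), Complex.cpow_zero, one_smul]
  rw [likelihoodOp, Finset.mul_sum, Finset.sum_mul, Finset.sum_congr rfl fun i _ => hterm i,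
    ← Finset.sum_mul, ← Finset.mul_sum, hP.sum_eq_one, Matrix.mul_one]

lemma norm_likelihoodOp_le_one (hP : IsPOVM P) (hz : z.re = 0) : ‖likelihoodOp ρ σ P z‖ ≤ 1 :=
  hP.norm_sum_smul_le_one fun _ => norm_supportCpow_le_one _ hz

lemma retr_likelihoodOp_mul_conjTranspose_mul_le (hP : IsPOVM P) (hρ : ρ.PosSemidef)
    (hσ : σ.PosSemidef) (hα₀ : α ≠ 0) (hα₁ : α ≠ 1) (hz : 2 * z.re = α - 1) :
    retr (likelihoodOp ρ σ P z * (likelihoodOp ρ σ P z)ᴴ * ρ) ≤ measuredSum α ρ σ P := by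
  refine (retr_mul_le_retr_mul (hP.sum_smul_mul_conjTranspose_le _) hρ).trans_eq ?_
  have hz' : (2 * z).re = α - 1 := by simpa using hz
  rw [← sum_norm_supportCpow_mul_eq_measuredSum hρ hσ hP.posSemidef hα₀ hα₁ hz', retr_mul_comm,
    retr, Finset.mul_sum, trace_sum, Complex.re_sum]
  refine Finset.sum_congr rfl fun i _ => ?_
  rw [norm_supportCpow_sq, mul_smul_comm, trace_smul, Complex.smul_re, smul_eq_mul, sub_self,
    Real.rpow_one, Real.rpow_zero, mul_one, retr]

lemma isStripBounded_likelihoodOp (ρ σ : Matrix ι ι ℂ) (P : κ → Matrix ι ι ℂ) {g : ℂ → ℂ} {a : ℂ}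
    {b : ℝ} (hg : ∀ z, g z = a + b * z) : IsStripBounded fun z => likelihoodOp ρ σ P (g z) :=
  (IsStripBounded.pi fun _ => isStripBounded_supportCpow _ hg).linearMap_comp
    (Fintype.linearCombination ℂ P)

end Likelihood

section Sandwiched

variable {ι : Type*} [Fintype ι] {ρ σ : Matrix ι ι ℂ}

lemma mul_eq_zero_of_mulVec_eq_zero_imp (hsupp : ∀ v : ι → ℂ, σ *ᵥ v = 0 → ρ *ᵥ v = 0)
    {B : Matrix ι ι ℂ} (h : σ * B = 0) : ρ * B = 0 := by
  refine ext_col fun j => ?_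
  exact hsupp _ (congrArg (fun M : Matrix ι ι ℂ => M.col j) h)

variable [DecidableEq ι]

lemma mul_cpowH_zero_eq_self (hσ : σ.PosSemidef) (hsupp : ∀ v : ι → ℂ, σ *ᵥ v = 0 → ρ *ᵥ v = 0) :
    ρ * cpowH σ 0 = ρ := by
  have hσ₀ : σ * (1 - cpowH σ 0) = 0 := by
    nth_rw 1 [← cpowH_one hσ]
    rw [Matrix.mul_sub, Matrix.mul_one, ← cpowH_add, add_zero, sub_self]
  have hρ₀ := mul_eq_zero_of_mulVec_eq_zero_imp hsupp hσ₀
  rwa [Matrix.mul_sub, Matrix.mul_one, sub_eq_zero, eq_comm] at hρ₀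

lemma cpowH_zero_mul_eq_self (hρ : ρ.PosSemidef) (hσ : σ.PosSemidef)
    (hsupp : ∀ v : ι → ℂ, σ *ᵥ v = 0 → ρ *ᵥ v = 0) : cpowH σ 0 * ρ = ρ := by
  have hadj := congrArg conjTranspose (mul_cpowH_zero_eq_self hσ hsupp)
  rwa [conjTranspose_mul, conjTranspose_cpowH, star_zero, hρ.1.eq] at hadj

/-- The operator `σ ^ ((1 - α) / (2 * α)) * ρ * σ ^ ((1 - α) / (2 * α))` whose `α`-th power has as
its trace the quantity inside the logarithm of the sandwiched Rényi divergence. -/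
def sandwichedOp (α : ℝ) (ρ σ : Matrix ι ι ℂ) : Matrix ι ι ℂ :=
  cpowH σ ((1 - α) / (2 * α) : ℝ) * ρ * cpowH σ ((1 - α) / (2 * α) : ℝ)

lemma posSemidef_sandwichedOp (hρ : ρ.PosSemidef) (α : ℝ) : (sandwichedOp α ρ σ).PosSemidef := by
  have hconj := hρ.mul_mul_conjTranspose_same (cpowH σ ((1 - α) / (2 * α) : ℝ))
  rwa [conjTranspose_cpowH_ofReal] at hconj

lemma cpowH_neg_mul_sandwichedOp_mul (hρ : ρ.PosSemidef) (hσ : σ.PosSemidef)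
    (hsupp : ∀ v : ι → ℂ, σ *ᵥ v = 0 → ρ *ᵥ v = 0) {α γ : ℝ} (hγ : γ = (1 - α) / (2 * α)) :
    cpowH σ (-γ : ℝ) * sandwichedOp α ρ σ * cpowH σ (-γ : ℝ) = ρ := by
  have hleft : cpowH σ (-γ : ℝ) * cpowH σ γ = cpowH σ 0 := by
    rw [← cpowH_add, Complex.ofReal_neg, neg_add_cancel]
  have hright : cpowH σ γ * cpowH σ (-γ : ℝ) = cpowH σ 0 := by
    rw [← cpowH_add, Complex.ofReal_neg, add_neg_cancel]
  calc cpowH σ (-γ : ℝ) * sandwichedOp α ρ σ * cpowH σ (-γ : ℝ)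
      = cpowH σ (-γ : ℝ) * cpowH σ γ * ρ * (cpowH σ γ * cpowH σ (-γ : ℝ)) := by
        simp only [sandwichedOp, ← hγ, Matrix.mul_assoc]
    _ = ρ := by
        rw [hleft, hright, cpowH_zero_mul_eq_self hρ hσ hsupp, mul_cpowH_zero_eq_self hσ hsupp]

lemma sandwichedOp_ne_zero (hρ : ρ.PosSemidef) (hσ : σ.PosSemidef) (hρ₀ : ρ ≠ 0)
    (hsupp : ∀ v : ι → ℂ, σ *ᵥ v = 0 → ρ *ᵥ v = 0) (α : ℝ) : sandwichedOp α ρ σ ≠ 0 := by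
  intro hzero
  have hinv := cpowH_neg_mul_sandwichedOp_mul hρ hσ hsupp (α := α) rfl
  rw [hzero, Matrix.mul_zero, Matrix.zero_mul] at hinv
  exact hρ₀ hinv.symm

lemma sandwichedRenyiDiv_eq_inv_mul_log_retr_cpowH (hρ : ρ.PosSemidef) (hσ : σ.PosSemidef)
    {α : ℝ} (hα₀ : α ≠ 0) (hα₁ : α ≠ 1) :
    sandwichedRenyiDiv α ρ σ = (α - 1)⁻¹ * Real.log (retr (cpowH (sandwichedOp α ρ σ) α)) := by
  have hγ : (1 - α) / (2 * α) ≠ 0 := div_ne_zero (sub_ne_zero.2 hα₁.symm) (by simpa using hα₀)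
  rw [sandwichedRenyiDiv, rpowH_eq_cpowH hσ hγ, ← sandwichedOp,
    rpowH_eq_cpowH (posSemidef_sandwichedOp hρ α) hα₀]

end Sandwiched

section GreaterThanOne

variable {ι κ : Type*} [Fintype ι] [DecidableEq ι] [Fintype κ] {ρ σ : Matrix ι ι ℂ}
  {P : κ → Matrix ι ι ℂ} {α : ℝ}

/-- The function `Tr[σ^{z/2} X^{α(1-z)} σ^{z/2} W(αz)]`, with `X` the sandwiched operator and `W`
the likelihood operator, to which the three lines theorem is applied for `α > 1`. -/
def interpolantGtOne (α : ℝ) (ρ σ : Matrix ι ι ℂ) (P : κ → Matrix ι ι ℂ) (z : ℂ) : ℂ :=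
  (cpowH σ (z / 2) * cpowH (sandwichedOp α ρ σ) (α * (1 - z)) * cpowH σ (z / 2) *
    likelihoodOp ρ σ P (α * z)).trace

lemma isStripBounded_interpolantGtOne (α : ℝ) (ρ σ : Matrix ι ι ℂ) (P : κ → Matrix ι ι ℂ) :
    IsStripBounded (interpolantGtOne α ρ σ P) := by
  have hS : IsStripBounded fun z => cpowH σ (z / 2) :=
    isStripBounded_cpowH σ (a := 0) (b := 1 / 2) fun z => by push_cast; ring
  have hX : IsStripBounded fun z => cpowH (sandwichedOp α ρ σ) (α * (1 - z)) :=
    isStripBounded_cpowH _ (a := α) (b := -α) fun z => by push_cast; ring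
  have hW : IsStripBounded fun z => likelihoodOp ρ σ P (α * z) :=
    isStripBounded_likelihoodOp ρ σ P (a := 0) (b := α) fun z => by ring
  exact (((hS.mul hX).mul hS).mul hW).linearMap_comp (traceLinearMap ι ℂ ℂ)

lemma norm_interpolantGtOne_le_of_re_eq_zero (hP : IsPOVM P) {z : ℂ} (hz : z.re = 0) :
    ‖interpolantGtOne α ρ σ P z‖ ≤ retr (cpowH (sandwichedOp α ρ σ) α) := by
  set X := sandwichedOp α ρ σ with hX
  set S := cpowH σ (z / 2)
  set W := likelihoodOp ρ σ P (α * z)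
  set Y := cpowH X (α * (1 - z) / 2)
  have hre : 2 * (α * (1 - z) / 2 : ℂ).re = α := by simp [hz, mul_div_cancel₀]
  have hS : ‖S‖ ≤ 1 := norm_cpowH_le_one σ (by simp [hz])
  have hW : ‖W‖ ≤ 1 := norm_likelihoodOp_le_one hP (by simp [hz])
  have hSWS : ‖S * W * S‖ ≤ 1 := by
    refine (norm_mul₃_le ..).trans ?_
    exact mul_le_one₀ (mul_le_one₀ hS (norm_nonneg _) hW) (norm_nonneg _) hS
  have hcyclic : interpolantGtOne α ρ σ P z = (Y * (S * W * S) * Y * (1 : Matrix ι ι ℂ)).trace := by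
    have hYY : cpowH X (α * (1 - z)) = Y * Y := by rw [← cpowH_add, add_halves]
    calc interpolantGtOne α ρ σ P z = (S * Y * (Y * S * W)).trace := by
          simp only [interpolantGtOne, ← hX, hYY, Matrix.mul_assoc, S, W]
      _ = (Y * S * W * (S * Y)).trace := trace_mul_comm _ _
      _ = (Y * (S * W * S) * Y * (1 : Matrix ι ι ℂ)).trace := by
          simp only [Matrix.mul_assoc, Matrix.mul_one]
  rw [hcyclic]
  refine (norm_trace_mul_mul_mul_le PosSemidef.one hSWS Y Y).trans_eq ?_
  rw [cpowH_mul_conjTranspose_cpowH, conjTranspose_cpowH_mul_cpowH, hre, Matrix.mul_one,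
    Real.mul_self_sqrt (retr_nonneg (posSemidef_cpowH_ofReal X α))]

lemma norm_interpolantGtOne_le_of_re_eq_one (hρ : ρ.PosSemidef) (hσ : σ.PosSemidef)
    (hP : ∀ i, (P i).PosSemidef) (hα₀ : α ≠ 0) (hα₁ : α ≠ 1) {z : ℂ} (hz : z.re = 1) :
    ‖interpolantGtOne α ρ σ P z‖ ≤ measuredSum α ρ σ P := by
  refine norm_trace_mul_likelihoodOp_le hρ hσ hP hα₀ hα₁ (a := 0) (by simp [hz]) fun i => ?_
  refine (norm_trace_mul_mul_mul_le (hP i) (norm_cpowH_le_one _ (by simp [hz])) _ _).trans_eq ?_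
  have hre : 2 * (z / 2).re = 1 := by simp [hz]
  rw [cpowH_mul_conjTranspose_cpowH, conjTranspose_cpowH_mul_cpowH, hre, Complex.ofReal_one,
    cpowH_one hσ, Real.mul_self_sqrt (retr_mul_nonneg hσ (hP i)), Real.rpow_zero, one_mul, sub_zero,
    Real.rpow_one]

lemma re_interpolantGtOne_apply (hρ : ρ.PosSemidef) (hσ : σ.PosSemidef)
    (hsupp : ∀ v : ι → ℂ, σ *ᵥ v = 0 → ρ *ᵥ v = 0) (hP : ∀ i, (P i).PosSemidef)
    (hα₀ : α ≠ 0) (hα₁ : α ≠ 1) :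
    (interpolantGtOne α ρ σ P ((α - 1) / α : ℝ)).re = measuredSum α ρ σ P := by
  have hαC : (α : ℂ) ≠ 0 := Complex.ofReal_ne_zero.2 hα₀
  have hS : (((α - 1) / α : ℝ) : ℂ) / 2 = (-((1 - α) / (2 * α)) : ℝ) := by
    push_cast; field_simp; ring
  have hX : (α : ℂ) * (1 - ((α - 1) / α : ℝ)) = 1 := by push_cast; field_simp; ring
  have hW : (α : ℂ) * ((α - 1) / α : ℝ) = (α - 1 : ℝ) := by push_cast; field_simp
  rw [interpolantGtOne, hS, hX, hW, cpowH_one (posSemidef_sandwichedOp hρ α),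
    cpowH_neg_mul_sandwichedOp_mul hρ hσ hsupp rfl]
  exact retr_mul_likelihoodOp hρ hσ hP hα₀ hα₁

theorem measuredSum_le_retr_cpowH_sandwichedOp (hρ : ρ.PosSemidef) (hσ : σ.PosSemidef)
    (hsupp : ∀ v : ι → ℂ, σ *ᵥ v = 0 → ρ *ᵥ v = 0) (hP : IsPOVM P) (hα : 1 < α) :
    measuredSum α ρ σ P ≤ retr (cpowH (sandwichedOp α ρ σ) α) := by
  have hα₀ : 0 < α := one_pos.trans hα
  have ht₁ : (α - 1) / α < 1 := (div_lt_one hα₀).2 (sub_one_lt α)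
  have ht : (α - 1) / α ∈ Set.Icc 0 1 := ⟨div_nonneg (sub_nonneg.2 hα.le) hα₀.le, ht₁.le⟩
  refine le_of_le_rpow_mul_rpow (measuredSum_nonneg hρ hσ hP.posSemidef)
    (retr_nonneg (posSemidef_cpowH_ofReal _ α)) ht₁ ?_
  calc measuredSum α ρ σ P = (interpolantGtOne α ρ σ P ((α - 1) / α : ℝ)).re :=
        (re_interpolantGtOne_apply hρ hσ hsupp hP.posSemidef hα₀.ne' hα.ne').symm
    _ ≤ ‖interpolantGtOne α ρ σ P ((α - 1) / α : ℝ)‖ := Complex.re_le_norm _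
    _ ≤ _ := (isStripBounded_interpolantGtOne α ρ σ P).norm_apply_ofReal_le ht
      (fun z hz => norm_interpolantGtOne_le_of_re_eq_zero hP hz)
      (fun z hz => norm_interpolantGtOne_le_of_re_eq_one hρ hσ hP.posSemidef hα₀.ne' hα.ne' hz)

end GreaterThanOne

section LessThanOne

variable {ι κ : Type*} [Fintype ι] [DecidableEq ι] [Fintype κ] {ρ σ : Matrix ι ι ℂ}
  {P : κ → Matrix ι ι ℂ} {α : ℝ}

/-- The operator `X^{(α(1-z)-1)/2} σ^{(1-α)/(2α)} ρ^{1/2}`, with `X` the sandwiched operator: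
multiplied by its adjoint it gives `X^{α(1 - Re z)}`. -/
def sandwichedFactor (α : ℝ) (ρ σ : Matrix ι ι ℂ) (z : ℂ) : Matrix ι ι ℂ :=
  cpowH (sandwichedOp α ρ σ) ((α * (1 - z) - 1) / 2) *
    (cpowH σ ((1 - α) / (2 * α) : ℝ) * cpowH ρ (1 / 2 : ℝ))

/-- The function `Tr[σ^{z/2} B(z) ρ^{1/2} W((α(1+z)-1)/2)]`, with `B` the sandwiched factor and `W`
the likelihood operator, to which the three lines theorem is applied for `α < 1`. -/
def interpolantLtOne (α : ℝ) (ρ σ : Matrix ι ι ℂ) (P : κ → Matrix ι ι ℂ) (z : ℂ) : ℂ :=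
  (cpowH σ (z / 2) * sandwichedFactor α ρ σ z * cpowH ρ (1 / 2 : ℝ) *
    likelihoodOp ρ σ P ((α * (1 + z) - 1) / 2)).trace

lemma cpowH_half_mul_cpowH_half (hρ : ρ.PosSemidef) :
    cpowH ρ (1 / 2 : ℝ) * cpowH ρ (1 / 2 : ℝ) = ρ := by
  rw [← cpowH_add, ← Complex.ofReal_add, add_halves, Complex.ofReal_one, cpowH_one hρ]

lemma sandwichedFactor_mul_conjTranspose (hρ : ρ.PosSemidef) (z : ℂ) :
    sandwichedFactor α ρ σ z * (sandwichedFactor α ρ σ z)ᴴ =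
      cpowH (sandwichedOp α ρ σ) (α * (1 - z.re) : ℝ) := by
  set w : ℂ := (α * (1 - z) - 1) / 2 with hw
  have hX : cpowH σ ((1 - α) / (2 * α) : ℝ) * cpowH ρ (1 / 2 : ℝ) *
      (cpowH σ ((1 - α) / (2 * α) : ℝ) * cpowH ρ (1 / 2 : ℝ))ᴴ =
        cpowH (sandwichedOp α ρ σ) 1 := by
    rw [cpowH_one (posSemidef_sandwichedOp hρ α), conjTranspose_mul, conjTranspose_cpowH_ofReal,
      conjTranspose_cpowH_ofReal, Matrix.mul_assoc, ← Matrix.mul_assoc (cpowH ρ _),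
      cpowH_half_mul_cpowH_half hρ, ← Matrix.mul_assoc, sandwichedOp]
  have hexp : w + 1 + star w = (α * (1 - z.re) : ℝ) := by
    have hre : w.re = (α * (1 - z.re) - 1) / 2 := by simp [hw]
    rw [add_right_comm, Complex.star_def, Complex.add_conj, hre]
    push_cast
    ring
  rw [sandwichedFactor, ← hw, conjTranspose_mul, Matrix.mul_assoc, ← Matrix.mul_assoc _ _ (_)ᴴ, hX,
    conjTranspose_cpowH, ← cpowH_add, ← cpowH_add, ← add_assoc, hexp]

lemma isStripBounded_interpolantLtOne (α : ℝ) (ρ σ : Matrix ι ι ℂ) (P : κ → Matrix ι ι ℂ) :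
    IsStripBounded (interpolantLtOne α ρ σ P) := by
  have hS : IsStripBounded fun z => cpowH σ (z / 2) :=
    isStripBounded_cpowH σ (a := 0) (b := 1 / 2) fun z => by push_cast; ring
  have hX : IsStripBounded fun z => cpowH (sandwichedOp α ρ σ) ((α * (1 - z) - 1) / 2) :=
    isStripBounded_cpowH _ (a := (α - 1) / 2) (b := -α / 2) fun z => by push_cast; ring
  have hW : IsStripBounded fun z => likelihoodOp ρ σ P ((α * (1 + z) - 1) / 2) :=
    isStripBounded_likelihoodOp ρ σ P (a := (α - 1) / 2) (b := α / 2) fun z => by push_cast; ring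
  exact (((hS.mul (hX.mul (isStripBounded_const _))).mul (isStripBounded_const _)).mul
    hW).linearMap_comp (traceLinearMap ι ℂ ℂ)

lemma norm_interpolantLtOne_le_of_re_eq_zero (hρ : ρ.PosSemidef) (hσ : σ.PosSemidef)
    (hP : IsPOVM P) (hα₀ : α ≠ 0) (hα₁ : α ≠ 1) {z : ℂ} (hz : z.re = 0) :
    ‖interpolantLtOne α ρ σ P z‖ ≤
      √(measuredSum α ρ σ P) * √(retr (cpowH (sandwichedOp α ρ σ) α)) := by
  set S := cpowH σ (z / 2)
  set B := sandwichedFactor α ρ σ z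
  set H := cpowH ρ (1 / 2 : ℝ)
  set W := likelihoodOp ρ σ P ((α * (1 + z) - 1) / 2)
  have hcyclic : interpolantLtOne α ρ σ P z = (H * W * S * B * (1 : Matrix ι ι ℂ)).trace := by
    calc interpolantLtOne α ρ σ P z = (S * B * (H * W)).trace := by
          simp only [interpolantLtOne, Matrix.mul_assoc, S, B, H, W]
      _ = (H * W * (S * B)).trace := trace_mul_comm _ _
      _ = (H * W * S * B * (1 : Matrix ι ι ℂ)).trace := by
          simp only [Matrix.mul_assoc, Matrix.mul_one]
  have hHW : retr (H * W * (H * W)ᴴ * 1) ≤ measuredSum α ρ σ P := by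
    refine le_of_eq_of_le ?_ (retr_likelihoodOp_mul_conjTranspose_mul_le hP hρ hσ hα₀ hα₁
      (by simp [hz, mul_div_cancel₀] : 2 * ((α * (1 + z) - 1) / 2 : ℂ).re = α - 1))
    rw [conjTranspose_mul, conjTranspose_cpowH_ofReal, Matrix.mul_one, ← Matrix.mul_assoc,
      retr_mul_comm, Matrix.mul_assoc H, ← Matrix.mul_assoc H, cpowH_half_mul_cpowH_half hρ,
      retr_mul_comm]
  have hB : retr (Bᴴ * B * 1) = retr (cpowH (sandwichedOp α ρ σ) α) := by
    rw [Matrix.mul_one, retr_mul_comm, sandwichedFactor_mul_conjTranspose hρ, hz, sub_zero, mul_one]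
  rw [hcyclic]
  have hS : ‖S‖ ≤ 1 := norm_cpowH_le_one σ (by simp [hz])
  refine (norm_trace_mul_mul_mul_le PosSemidef.one hS _ _).trans ?_
  rw [hB]
  gcongr

lemma norm_interpolantLtOne_le_of_re_eq_one (hρ : ρ.PosSemidef) (hσ : σ.PosSemidef)
    (hP : ∀ i, (P i).PosSemidef) (hα₀ : α ≠ 0) (hα₁ : α ≠ 1) {z : ℂ} (hz : z.re = 1) :
    ‖interpolantLtOne α ρ σ P z‖ ≤ measuredSum α ρ σ P := by
  have hW : ((α * (1 + z) - 1) / 2 : ℂ).re = α - 1 / 2 := by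
    simp only [Complex.div_ofNat_re, Complex.sub_re, Complex.re_ofReal_mul, Complex.add_re,
      Complex.one_re, hz]
    ring
  have hB : ‖sandwichedFactor α ρ σ z‖ ≤ 1 := by
    refine norm_le_one_of_norm_mul_conjTranspose_le_one ?_
    rw [sandwichedFactor_mul_conjTranspose hρ]
    exact norm_cpowH_le_one _ (by simp [hz])
  refine norm_trace_mul_likelihoodOp_le hρ hσ hP hα₀ hα₁ hW fun i => ?_
  refine (norm_trace_mul_mul_mul_le (hP i) hB _ _).trans_eq ?_
  have hre : 2 * (z / 2).re = 1 := by simp [hz]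
  rw [cpowH_mul_conjTranspose_cpowH, conjTranspose_cpowH_ofReal, cpowH_half_mul_cpowH_half hρ, hre,
    Complex.ofReal_one, cpowH_one hσ, Real.sqrt_eq_rpow, Real.sqrt_eq_rpow, mul_comm, sub_half]

lemma interpolantLtOne_apply (hρ : ρ.PosSemidef) (hσ : σ.PosSemidef) (hP : IsPOVM P)
    (hα₀ : α ≠ 0) :
    interpolantLtOne α ρ σ P ((1 - α) / α : ℝ) = (cpowH (sandwichedOp α ρ σ) α).trace := by
  set V := cpowH σ ((1 - α) / (2 * α) : ℝ) with hV
  set H := cpowH ρ (1 / 2 : ℝ) with hH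
  set X := sandwichedOp α ρ σ with hX
  have hαC : (α : ℂ) ≠ 0 := Complex.ofReal_ne_zero.2 hα₀
  have hS : (((1 - α) / α : ℝ) : ℂ) / 2 = ((1 - α) / (2 * α) : ℝ) := by push_cast; field_simp
  have hB : ((α : ℂ) * (1 - ((1 - α) / α : ℝ)) - 1) / 2 = α - 1 := by push_cast; field_simp; ring
  have hW : ((α : ℂ) * (1 + ((1 - α) / α : ℝ)) - 1) / 2 = 0 := by push_cast; field_simp; ring
  have hHWV : H * likelihoodOp ρ σ P 0 * V = H * V :=
    mul_likelihoodOp_zero_mul hP hρ hσ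
      (fun i hi => cpowH_mul_eq_zero hρ
        (mul_eq_zero_of_retr_mul_eq_zero hρ (hP.posSemidef i) hi) _)
      (fun i hi => mul_cpowH_eq_zero hσ
        (mul_eq_zero_of_retr_mul_eq_zero (hP.posSemidef i) hσ ((retr_mul_comm (P i) σ).trans hi)) _)
  calc interpolantLtOne α ρ σ P ((1 - α) / α : ℝ)
      = (V * (cpowH X (α - 1) * V * H * (H * likelihoodOp ρ σ P 0))).trace := by
        simp only [interpolantLtOne, sandwichedFactor, hS, hB, hW, ← hV, ← hH, ← hX,
          Matrix.mul_assoc]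
    _ = (cpowH X (α - 1) * V * H * (H * likelihoodOp ρ σ P 0) * V).trace := trace_mul_comm _ _
    _ = (cpowH X (α - 1) * (V * (H * H) * V)).trace := by
        rw [Matrix.mul_assoc _ (_ * _) V, hHWV]
        simp only [Matrix.mul_assoc]
    _ = (cpowH X (α - 1) * X).trace := by rw [cpowH_half_mul_cpowH_half hρ, hX, sandwichedOp]
    _ = (cpowH X (α - 1) * cpowH X 1).trace := by rw [cpowH_one (posSemidef_sandwichedOp hρ α)]
    _ = (cpowH X α).trace := by rw [← cpowH_add, sub_add_cancel]

theorem retr_cpowH_sandwichedOp_le_measuredSum (hρ : ρ.PosSemidef) (hσ : σ.PosSemidef)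
    (hP : IsPOVM P) (hα : 1 / 2 ≤ α) (hα₁ : α < 1) :
    retr (cpowH (sandwichedOp α ρ σ) α) ≤ measuredSum α ρ σ P := by
  have hα₀ : 0 < α := one_half_pos.trans_le hα
  have ht₀ : 0 ≤ (1 - α) / α := div_nonneg (sub_nonneg.2 hα₁.le) hα₀.le
  have ht₁ : (1 - α) / α ≤ 1 := (div_le_one hα₀).2 (by linarith)
  refine le_of_le_sqrt_mul_sqrt_rpow_mul_rpow (retr_nonneg (posSemidef_cpowH_ofReal _ α))
    (measuredSum_nonneg hρ hσ hP.posSemidef) ht₀ ht₁ ?_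
  calc retr (cpowH (sandwichedOp α ρ σ) α)
      = (interpolantLtOne α ρ σ P ((1 - α) / α : ℝ)).re := by
        rw [interpolantLtOne_apply hρ hσ hP hα₀.ne', retr]
    _ ≤ ‖interpolantLtOne α ρ σ P ((1 - α) / α : ℝ)‖ := Complex.re_le_norm _
    _ ≤ _ := (isStripBounded_interpolantLtOne α ρ σ P).norm_apply_ofReal_le ⟨ht₀, ht₁⟩
      (fun z hz => norm_interpolantLtOne_le_of_re_eq_zero hρ hσ hP hα₀.ne' hα₁.ne hz)
      (fun z hz => norm_interpolantLtOne_le_of_re_eq_one hρ hσ hP.posSemidef hα₀.ne' hα₁.ne hz)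

end LessThanOne

section Divergence

variable {ι κ : Type*} [Fintype ι] [Fintype κ] {ρ σ : Matrix ι ι ℂ}

lemma retr_mul_eq_zero_of_retr_mul_eq_zero (hσ : σ.PosSemidef)
    (hsupp : ∀ v : ι → ℂ, σ *ᵥ v = 0 → ρ *ᵥ v = 0) {Q : Matrix ι ι ℂ} (hQ : Q.PosSemidef)
    (h : retr (σ * Q) = 0) : retr (ρ * Q) = 0 := by
  have hρQ : ρ * Q = 0 :=
    mul_eq_zero_of_mulVec_eq_zero_imp hsupp (mul_eq_zero_of_retr_mul_eq_zero hσ hQ h)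
  rw [hρQ, retr, trace_zero, Complex.zero_re]

lemma renyiDivE_eq_inv_mul_log_measuredSum (hσ : σ.PosSemidef)
    (hsupp : ∀ v : ι → ℂ, σ *ᵥ v = 0 → ρ *ᵥ v = 0) {k : ℕ} {P : Fin k → Matrix ι ι ℂ}
    (hP : ∀ i, (P i).PosSemidef) (α : ℝ) :
    renyiDivE α (fun i => retr (ρ * P i)) (fun i => retr (σ * P i)) =
      ((α - 1)⁻¹ * Real.log (measuredSum α ρ σ P) : ℝ) :=
  if_pos (.inr fun i hi => retr_mul_eq_zero_of_retr_mul_eq_zero hσ hsupp (hP i) hi)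

variable [DecidableEq ι] {P : κ → Matrix ι ι ℂ}

lemma IsPOVM.exists_retr_mul_pos (hP : IsPOVM P) (hρ : ρ.PosSemidef) (hρ₀ : ρ ≠ 0) :
    ∃ i, 0 < retr (ρ * P i) := by
  by_contra! hle
  have hsum : retr ρ = ∑ i, retr (ρ * P i) := by
    simp only [retr, ← Complex.re_sum, ← trace_sum, ← Finset.mul_sum, hP.sum_eq_one, Matrix.mul_one]
  have hρ_le : retr ρ ≤ 0 := hsum ▸ Finset.sum_nonpos fun i _ => hle i
  exact hρ₀ ((retr_eq_zero_iff hρ).1 (hρ_le.antisymm (retr_nonneg hρ)))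

lemma measuredSum_pos (hρ : ρ.PosSemidef) (hρ₀ : ρ ≠ 0) (hσ : σ.PosSemidef)
    (hsupp : ∀ v : ι → ℂ, σ *ᵥ v = 0 → ρ *ᵥ v = 0) (hP : IsPOVM P) (α : ℝ) :
    0 < measuredSum α ρ σ P := by
  obtain ⟨i, hp⟩ := hP.exists_retr_mul_pos hρ hρ₀
  have hq : 0 < retr (σ * P i) := (retr_mul_nonneg hσ (hP.posSemidef i)).lt_of_ne' fun hq =>
    hp.ne' (retr_mul_eq_zero_of_retr_mul_eq_zero hσ hsupp (hP.posSemidef i) hq)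
  refine Finset.sum_pos' (fun j _ => ?_) ⟨i, Finset.mem_univ i, by positivity⟩
  exact mul_nonneg (Real.rpow_nonneg (retr_mul_nonneg hρ (hP.posSemidef j)) _)
    (Real.rpow_nonneg (retr_mul_nonneg hσ (hP.posSemidef j)) _)

lemma inv_mul_log_measuredSum_le_sandwichedRenyiDiv (hρ : ρ.PosSemidef) (hρ₀ : ρ ≠ 0)
    (hσ : σ.PosSemidef) (hsupp : ∀ v : ι → ℂ, σ *ᵥ v = 0 → ρ *ᵥ v = 0) (hP : IsPOVM P) {α : ℝ}
    (hα : (1 / 2 ≤ α ∧ α < 1) ∨ 1 < α) :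
    (α - 1)⁻¹ * Real.log (measuredSum α ρ σ P) ≤ sandwichedRenyiDiv α ρ σ := by
  rcases hα with ⟨hα, hα₁⟩ | hα
  · rw [sandwichedRenyiDiv_eq_inv_mul_log_retr_cpowH hρ hσ (one_half_pos.trans_le hα).ne' hα₁.ne]
    refine mul_le_mul_of_nonpos_left ?_ (inv_nonpos.2 (sub_nonpos.2 hα₁.le))
    exact Real.log_le_log (retr_cpowH_ofReal_pos (posSemidef_sandwichedOp hρ α)
      (sandwichedOp_ne_zero hρ hσ hρ₀ hsupp α) α)
      (retr_cpowH_sandwichedOp_le_measuredSum hρ hσ hP hα hα₁)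
  · rw [sandwichedRenyiDiv_eq_inv_mul_log_retr_cpowH hρ hσ (one_pos.trans hα).ne' hα.ne']
    refine mul_le_mul_of_nonneg_left ?_ (inv_nonneg.2 (sub_nonneg.2 hα.le))
    exact Real.log_le_log (measuredSum_pos hρ hρ₀ hσ hsupp hP α)
      (measuredSum_le_retr_cpowH_sandwichedOp hρ hσ hsupp hP hα)

end Divergence

theorem measured_le_sandwiched_general {ι : Type*} [Fintype ι] [DecidableEq ι]
    (ρ σ : Matrix ι ι ℂ) (hρ : ρ.PosSemidef) (hρ₀ : ρ ≠ 0) (hσ : σ.PosSemidef)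
    (hsupp : ∀ v : ι → ℂ, σ *ᵥ v = 0 → ρ *ᵥ v = 0)
    (α : ℝ) (hα : (1 / 2 ≤ α ∧ α < 1) ∨ 1 < α) :
    measuredRenyiDiv α ρ σ ≤ (sandwichedRenyiDiv α ρ σ : EReal) := by
  refine iSup₂_le fun k P => iSup₂_le fun hpos hsum => ?_
  rw [renyiDivE_eq_inv_mul_log_measuredSum hσ hsupp hpos, EReal.coe_le_coe_iff]
  exact inv_mul_log_measuredSum_le_sandwichedRenyiDiv hρ hρ₀ hσ hsupp ⟨hpos, hsum⟩ hα

/-- measured ≤ sandwiched.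
For density operators with `supp ρ ⊆ supp σ` and `α ∈ [1/2,1) ∪ (1,∞)`:
`D_α^𝕄(ρ‖σ) ≤ D_α^*(ρ‖σ)`. -/
theorem measured_le_sandwiched
    {ι : Type*} [Fintype ι] [DecidableEq ι]
    (ρ σ : Matrix ι ι ℂ)
    (hρ : ρ.PosSemidef) (hρtr : ρ.trace = 1)
    (hσ : σ.PosSemidef) (hσtr : σ.trace = 1)
    (hsupp : ∀ v : ι → ℂ, σ.mulVec v = 0 → ρ.mulVec v = 0)
    (α : ℝ) (hα : (1 / 2 ≤ α ∧ α < 1) ∨ 1 < α) :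
    measuredRenyiDiv α ρ σ ≤ ((sandwichedRenyiDiv α ρ σ : ℝ) : EReal) := by
  have hρ₀ : ρ ≠ 0 := fun h => by simp [h] at hρtr
  exact measured_le_sandwiched_general ρ σ hρ hρ₀ hσ hsupp α hα

end
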